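/- arXiv:2306.04327 — 2 statements merged into one kernel-verified Lean document; each statement's English description precedes it below -/
import Mathlib

section
/- Let $G$ be a connected finite undirected graph on vertices $\{1, \dots, n\}$, let $v \in \{1,\dots,n\}$, and for $x > 0$ let $\tilde{L}(x)$ be the perturbed Laplacian obtained by attaching pendant vertex $n+1$ to $v$ with edge weight $x$. Let $\Phi^* \in \mathbb{R}^{n+1}$ be the unit vector with $\Phi^*(i) = -1/\sqrt{n(n+1)}$ for $i \le n$ and $\Phi^*(n+1) = n/\sqrt{n(n+1)}$. Then for every $\varepsilon > 0$ there exists $\delta > 0$ such that for every $x \in (0, \delta)$ and every unit eigenvector $\Phi$ of $\tilde{L}(x)$ for its second smallest eigenvalue with $\Phi(n+1) \ge 0$, one has $\|\Phi - \Phi^*\|_2 < \varepsilon$. -/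
open Matrix BigOperators

/-- The Laplacian of the graph obtained from a graph `G` on `Fin n` by attaching a new pendant
vertex (the vertex `Fin.last n` of `Fin (n+1)`) to the vertex `v` by an edge of weight `x`:
`L̃(x) = [[L, 0], [0, 0]] + x (e_v - e_{n+1})(e_v - e_{n+1})ᵀ`. -/
noncomputable def pertLap (n : ℕ) (G : SimpleGraph (Fin n)) [DecidableRel G.Adj] (v : Fin n)
    (x : ℝ) : Matrix (Fin (n+1)) (Fin (n+1)) ℝ :=
  Matrix.reindex finSumFinEquiv finSumFinEquiv
      (Matrix.fromBlocks (G.lapMatrix ℝ) 0 0 0) +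
    x • Matrix.vecMulVec
      (fun i => if i = Fin.castSucc v then 1 else if i = Fin.last n then -1 else 0)
      (fun i => if i = Fin.castSucc v then 1 else if i = Fin.last n then -1 else 0)


/-- Along a walk, a function whose increments over edges have absolute value at most `s` changes by
at most `s` times the length of the walk. -/
lemma SimpleGraph.Walk.abs_sub_le_length_mul {V : Type*} {G : SimpleGraph V} {f : V → ℝ} {s : ℝ}
    (hf : ∀ i j, G.Adj i j → |f i - f j| ≤ s) {u w : V} (p : G.Walk u w) :
    |f u - f w| ≤ p.length * s := by
  induction p with
  | nil => simp
  | cons h p ih =>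
    rw [SimpleGraph.Walk.length_cons]
    push_cast
    linarith [abs_sub_le _ _ _ |>.trans (add_le_add (hf _ _ h) ih)]

/-- A discrete Poincaré inequality: on a connected graph the Laplacian energy of a function
controls all of its differences. -/
lemma SimpleGraph.Connected.sq_sub_le_lapMatrix {V : Type*} [Fintype V] [DecidableEq V]
    {G : SimpleGraph V} [DecidableRel G.Adj] (hG : G.Connected) (f : V → ℝ) (u w : V) :
    (f u - f w) ^ 2 ≤ (Fintype.card V : ℝ) ^ 2 * (2 * (f ⬝ᵥ G.lapMatrix ℝ *ᵥ f)) := by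
  set Q := f ⬝ᵥ G.lapMatrix ℝ *ᵥ f with hQ
  have hsum : 2 * Q = ∑ i : V, ∑ j : V, if G.Adj i j then (f i - f j) ^ 2 else 0 := by
    have h := G.lapMatrix_toLinearMap₂' ℝ f
    rw [toLinearMap₂'_apply', ← hQ] at h
    linarith
  have hpos : 0 ≤ 2 * Q := by
    rw [hsum]
    positivity
  have hedge : ∀ i j, G.Adj i j → |f i - f j| ≤ √(2 * Q) := by
    intro i j hij
    refine Real.abs_le_sqrt ?_
    rw [hsum]
    refine le_trans ?_ (Finset.single_le_sum (f := fun i => ∑ j : V,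
      if G.Adj i j then (f i - f j) ^ 2 else 0) (fun i _ => by positivity) (Finset.mem_univ i))
    refine le_trans ?_ (Finset.single_le_sum (f := fun j =>
      if G.Adj i j then (f i - f j) ^ 2 else 0) (fun j _ => by positivity) (Finset.mem_univ j))
    simp [hij]
  obtain ⟨p, hp⟩ := hG.exists_isPath u w
  have hlen : (p.length : ℝ) ≤ Fintype.card V := by exact_mod_cast hp.length_lt.le
  have h := (p.abs_sub_le_length_mul hedge).trans
    (mul_le_mul_of_nonneg_right hlen (Real.sqrt_nonneg _))
  calc (f u - f w) ^ 2 = |f u - f w| ^ 2 := (sq_abs _).symm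
    _ ≤ (Fintype.card V * √(2 * Q)) ^ 2 := by gcongr
    _ = _ := by rw [mul_pow, Real.sq_sqrt hpos]

/-- A real symmetric matrix has an orthonormal system of eigenvectors adapted to any enumeration
of the roots of its characteristic polynomial. -/
lemma Matrix.IsHermitian.exists_orthonormalBasis_of_roots {ι : Type*} [Fintype ι] [DecidableEq ι]
    {A : Matrix ι ι ℝ} (hA : A.IsHermitian) {μ : ι → ℝ}
    (hμ : A.charpoly.roots = Finset.univ.val.map μ) :
    ∃ b : OrthonormalBasis ι ℝ (EuclideanSpace ℝ ι), ∀ i, A *ᵥ (b i).ofLp = μ i • (b i).ofLp := by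
  rw [hA.roots_charpoly_eq_eigenvalues] at hμ
  obtain ⟨σ, hσ⟩ : ∃ σ : Equiv.Perm ι, hA.eigenvalues ∘ σ = μ := by
    have hcard : ∀ c, Nonempty ({i // μ i = c} ≃ {i // hA.eigenvalues i = c}) := by
      intro c
      refine ⟨Fintype.equivOfCardEq ?_⟩
      have h := congrArg (Multiset.count c) hμ
      simp only [Multiset.count_map] at h
      simp only [Fintype.card_subtype, Finset.card_def, Finset.filter_val]
      simpa [eq_comm] using h.symm
    exact ⟨Equiv.ofFiberEquiv fun c => (hcard c).some,
      funext fun i => Equiv.ofFiberEquiv_map _ i⟩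
  refine ⟨hA.eigenvectorBasis.reindex σ.symm, fun i => ?_⟩
  simp [← hσ, hA.mulVec_eigenvectorBasis]

lemma pertLap_isHermitian (n : ℕ) (G : SimpleGraph (Fin n)) [DecidableRel G.Adj] (v : Fin n)
    (x : ℝ) : (pertLap n G v x).IsHermitian := by
  unfold pertLap
  refine IsHermitian.add ?_ ?_
  · rw [reindex_apply]
    exact ((G.isHermitian_lapMatrix ℝ).fromBlocks (by simp) (by simp)).submatrix _
  · ext i j
    simp [vecMulVec_apply, mul_comm]

lemma pertLap_mulVec (n : ℕ) (G : SimpleGraph (Fin n)) [DecidableRel G.Adj] (v : Fin n)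
    (x : ℝ) (y : Fin (n + 1) → ℝ) :
    pertLap n G v x *ᵥ y =
      Fin.snoc (α := fun _ => ℝ) (G.lapMatrix ℝ *ᵥ (y ∘ Fin.castSucc)) 0 +
        (x * (y v.castSucc - y (Fin.last n))) •
          (fun i => if i = Fin.castSucc v then 1 else if i = Fin.last n then -1 else 0) := by
  have hlast : finSumFinEquiv.symm (Fin.last n) = Sum.inr (0 : Fin 1) := by
    rw [Equiv.symm_apply_eq]
    rfl
  have hcast (i : Fin n) : finSumFinEquiv.symm i.castSucc = (Sum.inl i : Fin n ⊕ Fin 1) := by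
    rw [Equiv.symm_apply_eq]
    rfl
  have hne (i : Fin n) : Fin.last n ≠ i.castSucc := (Fin.castSucc_ne_last i).symm
  unfold pertLap
  rw [add_mulVec, smul_mulVec, vecMulVec_mulVec]
  congr 1
  · ext i
    refine Fin.lastCases ?_ (fun i => ?_) i
    · simp [mulVec, dotProduct, Fin.sum_univ_castSucc, hlast, hcast]
    · simp [mulVec, dotProduct, Fin.sum_univ_castSucc, hlast, hcast]
  · ext i
    simp [dotProduct, Fin.sum_univ_castSucc, hne, sub_eq_add_neg]
    split_ifs <;> ring

lemma dotProduct_pertLap_mulVec (n : ℕ) (G : SimpleGraph (Fin n)) [DecidableRel G.Adj] (v : Fin n)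
    (x : ℝ) (y : Fin (n + 1) → ℝ) :
    y ⬝ᵥ pertLap n G v x *ᵥ y =
      (y ∘ Fin.castSucc) ⬝ᵥ G.lapMatrix ℝ *ᵥ (y ∘ Fin.castSucc) +
        x * (y v.castSucc - y (Fin.last n)) ^ 2 := by
  have hne (i : Fin n) : Fin.last n ≠ i.castSucc := (Fin.castSucc_ne_last i).symm
  rw [pertLap_mulVec, dotProduct_add, dotProduct_smul]
  simp [dotProduct, Fin.sum_univ_castSucc, hne]
  ring

lemma pertLap_mulVec_one (n : ℕ) (G : SimpleGraph (Fin n)) [DecidableRel G.Adj] (v : Fin n)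
    (x : ℝ) : pertLap n G v x *ᵥ 1 = 0 := by
  have h : G.lapMatrix ℝ *ᵥ ((1 : Fin (n + 1) → ℝ) ∘ Fin.castSucc) = 0 :=
    G.lapMatrix_mulVec_const_eq_zero
  ext i
  rw [pertLap_mulVec, h]
  refine Fin.lastCases ?_ (fun i => ?_) i <;> simp

/-- The kernel of the perturbed Laplacian consists of constant vectors. -/
lemma eq_const_of_pertLap_mulVec_eq_zero {n : ℕ} {G : SimpleGraph (Fin n)} [DecidableRel G.Adj]
    (hG : G.Connected) {v : Fin n} {x : ℝ} (hx : 0 < x) {y : Fin (n + 1) → ℝ}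
    (hy : pertLap n G v x *ᵥ y = 0) : y = y (Fin.last n) • 1 := by
  have h := dotProduct_pertLap_mulVec n G v x y
  have hQ : 0 ≤ (y ∘ Fin.castSucc) ⬝ᵥ G.lapMatrix ℝ *ᵥ (y ∘ Fin.castSucc) := by
    simpa using (G.posSemidef_lapMatrix ℝ).dotProduct_mulVec_nonneg (y ∘ Fin.castSucc)
  rw [hy, dotProduct_zero] at h
  have hv : 0 ≤ x * (y v.castSucc - y (Fin.last n)) ^ 2 := by positivity
  have hQ0 : (y ∘ Fin.castSucc) ⬝ᵥ G.lapMatrix ℝ *ᵥ (y ∘ Fin.castSucc) = 0 := by linarith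
  have hv0 : (y v.castSucc - y (Fin.last n)) ^ 2 = 0 := by
    have : x * (y v.castSucc - y (Fin.last n)) ^ 2 = 0 := by linarith
    simpa [hx.ne'] using this
  ext i
  refine Fin.lastCases (by simp) (fun i => ?_) i
  have hi := hG.sq_sub_le_lapMatrix (y ∘ Fin.castSucc) i v
  rw [hQ0] at hi
  have hi0 : (y i.castSucc - y v.castSucc) ^ 2 = 0 :=
    le_antisymm (by simpa using hi) (sq_nonneg _)
  have h1 := pow_eq_zero_iff two_ne_zero |>.mp hi0
  have h2 := pow_eq_zero_iff two_ne_zero |>.mp hv0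
  simp
  linarith

/-- The second smallest eigenvalue is at most the Rayleigh quotient of any vector orthogonal to
an eigenvector for the smallest one. -/
lemma Matrix.IsHermitian.second_eigenvalue_mul_le {n : ℕ} {A : Matrix (Fin (n + 1)) (Fin (n + 1)) ℝ}
    (hA : A.IsHermitian) {μ : Fin (n + 1) → ℝ} (hμ : Monotone μ)
    (b : OrthonormalBasis (Fin (n + 1)) ℝ (EuclideanSpace ℝ (Fin (n + 1))))
    (hb : ∀ i, A *ᵥ (b i).ofLp = μ i • (b i).ofLp) {w : Fin (n + 1) → ℝ}
    (hw : w ⬝ᵥ (b 0).ofLp = 0) : μ 1 * (w ⬝ᵥ w) ≤ w ⬝ᵥ A *ᵥ w := by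
  have hparseval (y z : Fin (n + 1) → ℝ) :
      y ⬝ᵥ z = ∑ i, (y ⬝ᵥ (b i).ofLp) * (z ⬝ᵥ (b i).ofLp) := by
    have h := b.sum_inner_mul_inner (WithLp.toLp 2 z) (WithLp.toLp 2 y)
    simp only [EuclideanSpace.inner_eq_star_dotProduct, star_trivial] at h
    rw [← h]
    refine Finset.sum_congr rfl fun i _ => ?_
    rw [dotProduct_comm (b i).ofLp z, mul_comm]
  have hmul (i : Fin (n + 1)) : (A *ᵥ w) ⬝ᵥ (b i).ofLp = μ i * (w ⬝ᵥ (b i).ofLp) := by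
    rw [dotProduct_comm, dotProduct_mulVec, ← mulVec_transpose,
      ← conjTranspose_eq_transpose_of_trivial, hA.eq, hb, smul_dotProduct, dotProduct_comm,
      smul_eq_mul]
  rw [hparseval w w, hparseval w (A *ᵥ w), Finset.mul_sum]
  refine Finset.sum_le_sum fun i _ => ?_
  rw [hmul]
  obtain rfl | hi := eq_or_ne i 0
  · simp [hw]
  · have h1 : μ 1 ≤ μ i := hμ (Fin.one_le_of_ne_zero hi)
    nlinarith [mul_le_mul_of_nonneg_right h1 (mul_self_nonneg (w ⬝ᵥ (b i).ofLp))]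

/-- The second smallest eigenvalue of the perturbed Laplacian is positive and at most `2 * x`. -/
lemma pertLap_second_eigenvalue {n : ℕ} {G : SimpleGraph (Fin n)} [DecidableRel G.Adj]
    (hG : G.Connected) {v : Fin n} {x : ℝ} (hx : 0 < x) {μ : Fin (n + 1) → ℝ} (hμ : Monotone μ)
    (hroots : (pertLap n G v x).charpoly.roots = Finset.univ.val.map μ) :
    0 < μ 1 ∧ μ 1 ≤ 2 * x := by
  have hn : 1 ≤ n := v.pos
  have hn' : (1 : ℝ) ≤ n := by exact_mod_cast hn
  have hA := pertLap_isHermitian n G v x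
  obtain ⟨b, hb⟩ := hA.exists_orthonormalBasis_of_roots hroots
  have hortho (i j : Fin (n + 1)) : (b i).ofLp ⬝ᵥ (b j).ofLp = if i = j then 1 else 0 := by
    have h := orthonormal_iff_ite.mp b.orthonormal j i
    rw [EuclideanSpace.inner_eq_star_dotProduct, star_trivial] at h
    simpa [eq_comm] using h
  have hker (i : Fin (n + 1)) (hi : μ i = 0) : (b i).ofLp = (b i).ofLp (Fin.last n) • 1 :=
    eq_const_of_pertLap_mulVec_eq_zero hG hx (by rw [hb, hi, zero_smul])
  have hnonneg (i : Fin (n + 1)) : 0 ≤ μ i := by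
    have h := dotProduct_pertLap_mulVec n G v x (b i).ofLp
    have hQ := (G.posSemidef_lapMatrix ℝ).dotProduct_mulVec_nonneg ((b i).ofLp ∘ Fin.castSucc)
    rw [hb, dotProduct_smul, hortho, if_pos rfl, smul_eq_mul, mul_one] at h
    rw [h]
    rw [star_trivial] at hQ
    positivity
  obtain ⟨i₀, hi₀⟩ : ∃ i, μ i = 0 := by
    have h : (0 : ℝ) ∈ (pertLap n G v x).charpoly.roots := by
      rw [Polynomial.mem_roots (charpoly_monic _).ne_zero, Polynomial.IsRoot, eval_charpoly]
      simp only [map_zero, zero_sub]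
      refine exists_mulVec_eq_zero_iff.mp ⟨1, one_ne_zero, ?_⟩
      rw [neg_mulVec, pertLap_mulVec_one, neg_zero]
    rw [hroots, Multiset.mem_map] at h
    exact h.imp fun _ => And.right
  have h0 : μ 0 = 0 := le_antisymm (hi₀ ▸ hμ (Fin.zero_le i₀)) (hnonneg 0)
  have hone : (1 : Fin (n + 1)) ≠ 0 := by
    obtain ⟨m, rfl⟩ := Nat.exists_eq_add_of_le' hn
    exact one_ne_zero
  have hself (i : Fin (n + 1)) (hi : μ i = 0) : (b i).ofLp (Fin.last n) ≠ 0 := by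
    intro hc
    have h := hortho i i
    rw [hker i hi, hc] at h
    simp at h
  refine ⟨lt_of_le_of_ne (hnonneg 1) fun h1 => ?_, ?_⟩
  · have h := hortho 1 0
    rw [hker 1 h1.symm, hker 0 h0, smul_dotProduct, dotProduct_smul, if_neg hone,
      one_dotProduct_one] at h
    refine mul_ne_zero (hself 1 h1.symm) (mul_ne_zero (hself 0 h0) ?_) h
    simpa using n.cast_add_one_ne_zero
  · set w : Fin (n + 1) → ℝ := Fin.snoc (α := fun _ => ℝ) (fun _ => -1) (n : ℝ) with hw
    have hw0 : w ⬝ᵥ (b 0).ofLp = 0 := by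
      rw [hker 0 h0, dotProduct_smul]
      simp [hw, dotProduct, Fin.sum_univ_castSucc]
    have h := hA.second_eigenvalue_mul_le hμ b hb hw0
    have hconst : w ∘ Fin.castSucc = (-1 : ℝ) • fun _ => 1 := by
      ext i
      simp [hw]
    rw [dotProduct_pertLap_mulVec, hconst, mulVec_smul, G.lapMatrix_mulVec_const_eq_zero] at h
    have hww : w ⬝ᵥ w = n * (n + 1) := by
      simp [hw, dotProduct, Fin.sum_univ_castSucc]
      ring
    rw [hww] at h
    simp only [hw, smul_zero, dotProduct_zero, Fin.snoc_castSucc, Fin.snoc_last, zero_add] at h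
    have h2 : (n * (n + 1) : ℝ) * μ 1 ≤ (n * (n + 1)) * (2 * x) := by
      nlinarith [mul_nonneg (mul_nonneg hx.le (by positivity : (0 : ℝ) ≤ n + 1))
        (sub_nonneg.mpr hn')]
    exact le_of_mul_le_mul_left h2 (by positivity)

/-- A unit vector orthogonal to the constants, with nonnegative last entry, whose other entries
differ pairwise by at most `√T`, is close to the normalised vector `(-1, …, -1, n)`. -/
lemma sum_sq_sub_le_of_nearly_const {n : ℕ} (v : Fin n) {Φ : Fin (n + 1) → ℝ} {T : ℝ}
    (hunit : ∑ i, Φ i ^ 2 = 1) (hsum : ∑ i, Φ i = 0) (hlast : 0 ≤ Φ (Fin.last n))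
    (hT : ∀ i : Fin n, (Φ i.castSucc - Φ v.castSucc) ^ 2 ≤ T) :
    ∑ i : Fin (n + 1), (Φ i - (if i = Fin.last n then (n : ℝ) / √(n * (n + 1))
      else -1 / √(n * (n + 1)))) ^ 2 ≤ 2 * (n * T) := by
  have hn : (1 : ℝ) ≤ n := by exact_mod_cast (v.pos : 1 ≤ n)
  set r := √((n : ℝ) * (n + 1)) with hr
  have hr2 : r ^ 2 = n * (n + 1) := Real.sq_sqrt (by positivity)
  have hrpos : 0 < r := Real.sqrt_pos.mpr (by positivity)
  set b := Φ (Fin.last n) with hb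
  set a := Φ v.castSucc with ha
  rw [Fin.sum_univ_castSucc] at hunit hsum
  have hvar : ∑ i : Fin n, (Φ i.castSucc - a) ^ 2 ≤ n * T := by
    simpa using Finset.sum_le_card_nsmul Finset.univ _ T fun i _ => hT i
  have hexpand (c : ℝ) : ∑ i : Fin n, (Φ i.castSucc - c) ^ 2
      = (1 - b ^ 2) + 2 * c * b + n * c ^ 2 := by
    have h1 : ∑ i : Fin n, Φ i.castSucc ^ 2 = 1 - b ^ 2 := by linarith
    have h2 : ∑ i : Fin n, Φ i.castSucc = -b := by linarith
    simp only [sub_sq, Finset.sum_add_distrib, Finset.sum_sub_distrib, ← Finset.sum_mul,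
      ← Finset.mul_sum, h1, h2]
    simp
    ring
  rw [hexpand] at hvar
  set c := b * (n + 1) / r with hc
  have hc0 : 0 ≤ c := by positivity
  have hc2 : n * c ^ 2 = b ^ 2 * (n + 1) := by
    rw [hc, div_pow, hr2]
    field_simp
  have hlow : 1 - n * T ≤ c ^ 2 := by
    have : n * (1 - n * T) ≤ n * c ^ 2 := by
      rw [hc2]
      nlinarith [sq_nonneg (n * a + b), mul_le_mul_of_nonneg_left hvar (by positivity : (0 : ℝ) ≤ n)]
    exact le_of_mul_le_mul_left this (by positivity)
  have hdist : ∑ i : Fin (n + 1), (Φ i - (if i = Fin.last n then (n : ℝ) / r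
      else -1 / r)) ^ 2 = 2 - 2 * c := by
    rw [Fin.sum_univ_castSucc]
    simp only [Fin.castSucc_ne_last, if_false, if_true, hexpand, ← hb, hc]
    field_simp
    linear_combination -hr2
  have hc1 : c ≤ 1 := by
    have : 0 ≤ 2 - 2 * c := by
      rw [← hdist]
      positivity
    linarith
  rw [hdist]
  nlinarith

/-- Let `Φ*` be the unit vector with `Φ*(i) = -1/√(n(n+1))` for `i ≤ n` and
`Φ*(n+1) = n/√(n(n+1))`. For every `ε > 0` there is `δ > 0` such that for every `x ∈ (0, δ)`
and every unit eigenvector `Φ` of `L̃(x)` for its second smallest eigenvalue `μ 1`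
(eigenvalues with multiplicity enumerated in increasing order by `μ`) with `Φ(n+1) ≥ 0`,
one has `‖Φ - Φ*‖₂ < ε`. -/
theorem fiedler_stmt_8 (n : ℕ) (G : SimpleGraph (Fin n)) [DecidableRel G.Adj]
    (hG : G.Connected) (v : Fin n) :
    ∀ ε > (0 : ℝ), ∃ δ > (0 : ℝ), ∀ x : ℝ, 0 < x → x < δ →
      ∀ μ : Fin (n+1) → ℝ, Monotone μ →
        (pertLap n G v x).charpoly.roots = Finset.univ.val.map μ →
        ∀ Φ : Fin (n+1) → ℝ, ∑ i, Φ i ^ 2 = 1 →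
          pertLap n G v x *ᵥ Φ = μ 1 • Φ → 0 ≤ Φ (Fin.last n) →
          Real.sqrt (∑ i : Fin (n+1),
              (Φ i - (if i = Fin.last n then (n : ℝ) / Real.sqrt (n * (n + 1))
                      else -1 / Real.sqrt (n * (n + 1)))) ^ 2) < ε := by
  intro ε hε
  have hn : (0 : ℝ) < n := by exact_mod_cast v.pos
  refine ⟨ε ^ 2 / (8 * n ^ 3), by positivity, ?_⟩
  intro x hx hxδ μ hμ hroots Φ hunit hΦ hlast
  obtain ⟨hpos, hle⟩ := pertLap_second_eigenvalue hG hx hμ hroots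
  have hsum : ∑ i, Φ i = 0 := by
    have h : (1 : Fin (n + 1) → ℝ) ⬝ᵥ pertLap n G v x *ᵥ Φ = 0 := by
      rw [dotProduct_mulVec, ← mulVec_transpose, ← conjTranspose_eq_transpose_of_trivial,
        (pertLap_isHermitian n G v x).eq, pertLap_mulVec_one, zero_dotProduct]
    rw [hΦ, dotProduct_smul, one_dotProduct, smul_eq_mul] at h
    exact (mul_eq_zero.mp h).resolve_left hpos.ne'
  have henergy : (Φ ∘ Fin.castSucc) ⬝ᵥ G.lapMatrix ℝ *ᵥ (Φ ∘ Fin.castSucc) ≤ 2 * x := by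
    have h := dotProduct_pertLap_mulVec n G v x Φ
    have hΦΦ : Φ ⬝ᵥ Φ = 1 := by
      rw [← hunit]
      exact Finset.sum_congr rfl fun i _ => (sq (Φ i)).symm
    rw [hΦ, dotProduct_smul, hΦΦ, smul_eq_mul, mul_one] at h
    have : 0 ≤ x * (Φ v.castSucc - Φ (Fin.last n)) ^ 2 := by positivity
    linarith
  have hdist := sum_sq_sub_le_of_nearly_const v (T := n ^ 2 * (2 * (2 * x))) hunit hsum hlast
    fun i => (hG.sq_sub_le_lapMatrix (Φ ∘ Fin.castSucc) i v).trans (by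
      rw [Fintype.card_fin]
      gcongr)
  rw [Real.sqrt_lt' hε]
  refine hdist.trans_lt ?_
  rw [lt_div_iff₀ (by positivity)] at hxδ
  linarith
end

section
/- Let $n \ge 2$, let $K_n$ be the complete graph on $\{1, \dots, n\}$, and for $x > 0$ let $\tilde{L}(x)$ be the perturbed Laplacian obtained by attaching pendant vertex $n+1$ to vertex $n$ with edge weight $x$. Let $a_-(x)$ be the smaller root of $p_x(a) = a^2 - a(2x+n-2) + (n-1)(x-1)$ and let $\Phi_x = (-1, \dots, -1, a_-(x), n-1-a_-(x)) \in \mathbb{R}^{n+1}$. Then for every $x > 0$, $\Phi_x$ is an eigenvector of $\tilde{L}(x)$ with eigenvalue $a_-(x) + 1$, the entries of $\Phi_x$ sum to zero, and $\Phi_x(n+1) > \Phi_x(n)$, i.e., the pendant vertex $n+1$ carries a strictly larger value than the attachment vertex $n$. -/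
open Matrix BigOperators

/-- The action of the perturbed Laplacian of a graph on the original vertices. -/
lemma pertLap_mulVec_castSucc (n : ℕ) (G : SimpleGraph (Fin n)) [DecidableRel G.Adj] (v : Fin n)
    (x : ℝ) (f : Fin (n + 1) → ℝ) (i : Fin n) :
    (pertLap n G v x *ᵥ f) i.castSucc = (G.lapMatrix ℝ *ᵥ fun j => f j.castSucc) i +
      if i = v then x * (f v.castSucc - f (Fin.last n)) else 0 := by
  have hl : finSumFinEquiv.symm (Fin.last n) = (Sum.inr 0 : Fin n ⊕ Fin 1) :=
    finSumFinEquiv_symm_last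
  have hc (j : Fin n) : finSumFinEquiv.symm j.castSucc = (Sum.inl j : Fin n ⊕ Fin 1) :=
    finSumFinEquiv_symm_apply_castAdd j
  simp only [pertLap, Matrix.add_mulVec, Matrix.smul_mulVec, Pi.add_apply, Pi.smul_apply]
  congr 1
  · simp [Matrix.mulVec, dotProduct, Fin.sum_univ_castSucc, hc, hl]
  · simp [Matrix.mulVec, dotProduct, Matrix.vecMulVec_apply, Fin.sum_univ_castSucc,
      (Fin.castSucc_lt_last v).ne']
    split_ifs <;> simp [sub_eq_add_neg]

/-- The action of the perturbed Laplacian of a graph on the pendant vertex. -/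
lemma pertLap_mulVec_last (n : ℕ) (G : SimpleGraph (Fin n)) [DecidableRel G.Adj] (v : Fin n)
    (x : ℝ) (f : Fin (n + 1) → ℝ) :
    (pertLap n G v x *ᵥ f) (Fin.last n) = x * (f (Fin.last n) - f v.castSucc) := by
  have hl : finSumFinEquiv.symm (Fin.last n) = (Sum.inr 0 : Fin n ⊕ Fin 1) :=
    finSumFinEquiv_symm_last
  have hc (j : Fin n) : finSumFinEquiv.symm j.castSucc = (Sum.inl j : Fin n ⊕ Fin 1) :=
    finSumFinEquiv_symm_apply_castAdd j
  simp [pertLap, Matrix.mulVec, dotProduct, Matrix.vecMulVec_apply,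
    Fin.sum_univ_castSucc, hc, hl, (Fin.castSucc_lt_last v).ne']
  ring

/-- The Laplacian of the complete graph is `n • 1 - J`. -/
lemma lapMatrix_top_mulVec (n : ℕ) (f : Fin n → ℝ) (i : Fin n) :
    ((⊤ : SimpleGraph (Fin n)).lapMatrix ℝ *ᵥ f) i = n * f i - ∑ j, f j := by
  have hn : 1 ≤ n := i.pos
  rw [SimpleGraph.lapMatrix_mulVec_apply, ← Finset.add_sum_erase _ _ (Finset.mem_univ i)]
  have h : (⊤ : SimpleGraph (Fin n)).neighborFinset i = Finset.univ.erase i := by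
    ext j
    simp [eq_comm]
  rw [h, SimpleGraph.complete_graph_degree]
  simp [Nat.cast_sub hn]
  ring

/-- The smaller root of `p_x` lies strictly to the left of `m / 2`, where `m = n - 1`, because
`p_x` is negative there. -/
lemma smaller_root_lt_half {m x a : ℝ} (hm : 0 < m)
    (ha : a ^ 2 - a * (2 * x + m - 1) + m * (x - 1) = 0)
    (hmin : ∀ b : ℝ, b ^ 2 - b * (2 * x + m - 1) + m * (x - 1) = 0 → a ≤ b) :
    a < m / 2 := by
  have h := hmin (2 * x + m - 1 - a) (by linear_combination ha)
  by_contra! hle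
  nlinarith [mul_nonneg (sub_nonneg.2 hle) (sub_nonneg.2 (hle.trans h)), mul_pos hm hm]

/-- For the complete graph `Kₙ` (`n ≥ 2`) with a pendant vertex attached to
the vertex of index `n-1` (vertex `n` in 1-based labelling) by an edge of weight `x > 0`, let
`a` be the smaller root of `p_x(a) = a² - a(2x + n - 2) + (n-1)(x-1)` and
`Φ = (-1, …, -1, a, n - 1 - a)`. Then `Φ` is an eigenvector of `L̃(x)` with eigenvalue `a + 1`,
its entries sum to zero, and the pendant vertex carries a strictly larger value than the
attachment vertex: `Φ(n+1) > Φ(n)`. -/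
theorem fiedler_stmt_13 (n : ℕ) (hn : 2 ≤ n) (x : ℝ) (hx : 0 < x) (a : ℝ)
    (ha : a ^ 2 - a * (2 * x + (n : ℝ) - 2) + ((n : ℝ) - 1) * (x - 1) = 0)
    (hmin : ∀ a' : ℝ,
      a' ^ 2 - a' * (2 * x + (n : ℝ) - 2) + ((n : ℝ) - 1) * (x - 1) = 0 → a ≤ a') :
    let Φ : Fin (n+1) → ℝ := fun i =>
      if i = Fin.last n then (n : ℝ) - 1 - a else if (i : ℕ) = n - 1 then a else -1
    (Φ ≠ 0 ∧ pertLap n ⊤ ⟨n - 1, by omega⟩ x *ᵥ Φ = (a + 1) • Φ) ∧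
    (∑ i, Φ i = 0) ∧
    Φ (Fin.castSucc ⟨n - 1, by omega⟩) < Φ (Fin.last n) := by
  intro Φ
  have hn' : (2 : ℝ) ≤ n := by exact_mod_cast hn
  set v : Fin n := ⟨n - 1, by omega⟩ with hv
  have hlast : Φ (Fin.last n) = n - 1 - a := by simp [Φ]
  have hcast (i : Fin n) : Φ i.castSucc = if i = v then a else -1 := by
    simp [Φ, hv, Fin.ext_iff, i.isLt.ne]
  have hsum : ∑ i : Fin n, Φ i.castSucc = a - (n - 1) := by
    simp_rw [hcast]
    rw [← Finset.add_sum_erase _ _ (Finset.mem_univ v), if_pos rfl,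
      Finset.sum_congr rfl fun j hj => if_neg (Finset.ne_of_mem_erase hj)]
    simp [Nat.cast_sub (show 1 ≤ n by omega)]
    ring
  have hlt : a < ((n : ℝ) - 1) / 2 :=
    smaller_root_lt_half (x := x) (by linarith) (by linear_combination ha)
      fun b hb => hmin b (by linear_combination hb)
  have hlt' : Φ v.castSucc < Φ (Fin.last n) := by
    rw [hlast, hcast, if_pos rfl]
    linarith
  refine ⟨⟨fun h => by simp [h] at hlt', ?_⟩, ?_, hlt'⟩
  · ext i
    induction i using Fin.lastCases with
    | last =>
      rw [pertLap_mulVec_last, Pi.smul_apply, smul_eq_mul, hlast, hcast, if_pos rfl]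
      linear_combination ha
    | cast i =>
      rw [pertLap_mulVec_castSucc, lapMatrix_top_mulVec, hsum, Pi.smul_apply, smul_eq_mul,
        hlast, hcast, hcast, if_pos rfl]
      split_ifs
      · linear_combination -ha
      · ring
  · rw [Fin.sum_univ_castSucc, hsum, hlast]
    ring
end
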